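/- Let μ ≥ 1. Let X' ∈ ℝ^{m'×2} (m' ≥ 1) and X'' ∈ ℝ^{m''×2} (m'' ≥ 1) each be μ-complex in both the ℓ₀ and ℓ₁ sense, with ‖X''η‖₁ ≤ 2μ·‖X'η‖₁ for all η ∈ ℝ². Let X ∈ ℝ^{m×2} (m = m'+m'') be their vertical concatenation, and let c_1,…,c_m ∈ (0,1/2) with E ≥ max_i ln(1/c_i). Define f₁(Xβ) = ∑_{i ∈ rows of X'} g_{c_i}(x_i·β) and f₂(Xβ) = ∑_{i ∈ rows of X''} h_{c_i}(x_i·β). Then there exist nonnegative reals s_1,…,s_m with ∑_{i=1}^m s_i ≤ 170·μ²·√m + 7·E·μ such that for every i ∈ [m] and every β ∈ ℝ²: if row i belongs to X' then g_{c_i}(x_i·β) ≤ s_i·(f₁(Xβ)+f₂(Xβ)), and if row i belongs to X'' then h_{c_i}(x_i·β) ≤ s_i·(f₁(Xβ)+f₂(Xβ)). In particular, the total sensitivity of the 3PL objective f₁+f₂ is at most 170·μ²·√m + 7·E·μ = O(√m). -/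

import Mathlib

/-!
Every summand is at most a constant plus `|xᵢ·β|`, and the objective `f = f₁ + f₂` dominates both parts.
By ℓ₀-complexity a `1/(1+μ)` fraction of the rows of `X'` has `xᵢ·β ≥ 0`, where `g ≥ 1/2`, and the same
fraction of the rows of `X''` has `xᵢ·β ≤ 0`, where `h ≥ 1/4`; hence `m ≤ 4(1+μ) f`.  By ℓ₁-complexity
`‖X'β‖₁ ≤ (1+μ) f₁`, and the ratio hypothesis transfers this to `‖X''β‖₁ ≤ 2μ(1+μ) f₁`.

It remains to bound `|xᵢ·β| / ‖Xβ‖₁`.  ℓ₀-complexity makes both matrices injective, so the leverage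
scores `τᵢ` exist, `|xᵢ·β| ≤ √τᵢ ‖Xβ‖₂ ≤ √τᵢ ‖Xβ‖₁`, and since `∑ τᵢ = 2`, Cauchy-Schwarz gives
`∑ √τᵢ ≤ √(2n)` (`exists_l1_sensitivity`).  The resulting total is well below `170 μ² √m`; the term
`7Eμ` is only used through its being nonnegative.
-/

open Finset Matrix

/-- `g_c(z) = ln(1+e^z) - ln(1-c)`. -/
noncomputable def gfun (c z : ℝ) : ℝ := Real.log (1 + Real.exp z) - Real.log (1 - c)

/-- `h_c(z) = -ln(c + (1-c)/(1+e^{-z}))`. -/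
noncomputable def hfun (c z : ℝ) : ℝ := -Real.log (c + (1 - c) / (1 + Real.exp (-z)))

/-- The rows `x` are `μ`-complex in the ℓ₁ sense. -/
def Mu1Complex {ι : Type} [Fintype ι] {d : ℕ} (x : ι → Fin d → ℝ) (μ : ℝ) : Prop :=
  ∀ η : Fin d → ℝ,
    ∑ i ∈ Finset.univ.filter (fun i => 0 ≤ x i ⬝ᵥ η), x i ⬝ᵥ η ≤
      μ * ∑ i ∈ Finset.univ.filter (fun i => x i ⬝ᵥ η < 0), |x i ⬝ᵥ η|

/-- The rows `x` are `μ`-complex in the ℓ₀ sense. -/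
def Mu0Complex {ι : Type} [Fintype ι] {d : ℕ} (x : ι → Fin d → ℝ) (μ : ℝ) : Prop :=
  ∀ η : Fin d → ℝ, η ≠ 0 →
    ((Finset.univ.filter fun i => 0 ≤ x i ⬝ᵥ η).card : ℝ) ≤
      μ * ((Finset.univ.filter fun i => x i ⬝ᵥ η < 0).card : ℝ)

lemma half_le_gfun {c z : ℝ} (hc0 : 0 < c) (hc : c < 1 / 2) (hz : 0 ≤ z) : 1 / 2 ≤ gfun c z := by
  unfold gfun
  have h1 : Real.log (1 - c) ≤ 0 := Real.log_nonpos (by linarith) (by linarith)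
  have h2 : Real.log 2 ≤ Real.log (1 + Real.exp z) :=
    Real.log_le_log (by norm_num) (by linarith [Real.one_le_exp hz])
  linarith [Real.log_two_gt_d9]

lemma max_le_gfun {c : ℝ} (z : ℝ) (hc0 : 0 < c) (hc : c < 1 / 2) : max z 0 ≤ gfun c z := by
  unfold gfun
  have h1 : Real.log (1 - c) ≤ 0 := Real.log_nonpos (by linarith) (by linarith)
  have h2 : z ≤ Real.log (1 + Real.exp z) := by
    rw [Real.le_log_iff_exp_le (by positivity)]
    linarith
  have h3 : 0 ≤ Real.log (1 + Real.exp z) := Real.log_nonneg (by linarith [Real.exp_pos z])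
  exact max_le (by linarith) (by linarith)

lemma log_one_add_exp_le (z : ℝ) : Real.log (1 + Real.exp z) ≤ Real.log 2 + |z| := by
  have h1 : Real.exp z ≤ Real.exp |z| := Real.exp_le_exp.2 (le_abs_self z)
  have h2 : 1 ≤ Real.exp |z| := Real.one_le_exp (abs_nonneg z)
  calc Real.log (1 + Real.exp z) ≤ Real.log (2 * Real.exp |z|) :=
        Real.log_le_log (by positivity) (by linarith)
    _ = Real.log 2 + |z| := by
        rw [Real.log_mul (by norm_num) (Real.exp_ne_zero _), Real.log_exp]

lemma gfun_le {c : ℝ} (z : ℝ) (hc : c < 1 / 2) : gfun c z ≤ 2 + |z| := by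
  unfold gfun
  have h1 : Real.log (1 / 2) ≤ Real.log (1 - c) := Real.log_le_log (by norm_num) (by linarith)
  rw [one_div, Real.log_inv] at h1
  linarith [log_one_add_exp_le z, Real.log_two_lt_d9]

lemma hfun_le {c : ℝ} (z : ℝ) (hc0 : 0 < c) : hfun c z ≤ 2 + |z| := by
  unfold hfun
  have hp : 0 < 1 + Real.exp (-z) := by positivity
  -- The argument of the logarithm is at least the logistic function of `z`.
  have h1 : (1 + Real.exp (-z))⁻¹ ≤ c + (1 - c) / (1 + Real.exp (-z)) := by
    have hi : (1 + Real.exp (-z))⁻¹ ≤ 1 := inv_le_one_of_one_le₀ (by linarith [Real.exp_pos (-z)])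
    rw [div_eq_mul_inv]
    nlinarith
  have h2 := Real.log_le_log (inv_pos.2 hp) h1
  rw [Real.log_inv] at h2
  have h3 := log_one_add_exp_le (-z)
  rw [abs_neg] at h3
  linarith [Real.log_two_lt_d9]

lemma hfun_nonneg {c : ℝ} (z : ℝ) (hc0 : 0 < c) (hc : c < 1 / 2) : 0 ≤ hfun c z := by
  unfold hfun
  have hi : (1 + Real.exp (-z))⁻¹ ≤ 1 := inv_le_one_of_one_le₀ (by linarith [Real.exp_pos (-z)])
  have hi0 : 0 < (1 + Real.exp (-z))⁻¹ := by positivity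
  have := Real.log_nonpos (x := c + (1 - c) / (1 + Real.exp (-z)))
    (by rw [div_eq_mul_inv]; nlinarith) (by rw [div_eq_mul_inv]; nlinarith)
  linarith

lemma quarter_le_hfun {c z : ℝ} (hc0 : 0 < c) (hc : c < 1 / 2) (hz : z ≤ 0) :
    1 / 4 ≤ hfun c z := by
  unfold hfun
  have hi : (1 + Real.exp (-z))⁻¹ ≤ 2⁻¹ :=
    inv_anti₀ (by norm_num) (by linarith [Real.one_le_exp (neg_nonneg.2 hz)])
  have hi0 : 0 < (1 + Real.exp (-z))⁻¹ := by positivity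
  have h0 : 0 < c + (1 - c) / (1 + Real.exp (-z)) := by rw [div_eq_mul_inv]; nlinarith
  have h1 : c + (1 - c) / (1 + Real.exp (-z)) ≤ 3 / 4 := by rw [div_eq_mul_inv]; nlinarith
  linarith [Real.log_le_sub_one_of_pos h0]

lemma Mu0Complex.card_le {n : ℕ} {x : Fin n → Fin 2 → ℝ} {μ : ℝ} (hμ : 1 ≤ μ)
    (hx : Mu0Complex x μ) (β : Fin 2 → ℝ) :
    (n : ℝ) ≤ (1 + μ) * ((Finset.univ.filter fun i => 0 ≤ x i ⬝ᵥ β).card : ℝ) := by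
  by_cases hβ : β = 0
  · subst hβ
    have hn : (0 : ℝ) ≤ n := Nat.cast_nonneg n
    simp
    nlinarith
  · have h := hx (-β) (neg_ne_zero.2 hβ)
    simp only [dotProduct_neg, Left.neg_neg_iff, Left.nonneg_neg_iff] at h
    have h1 : ((Finset.univ.filter fun i => 0 < x i ⬝ᵥ β).card : ℝ) ≤
        (Finset.univ.filter fun i => 0 ≤ x i ⬝ᵥ β).card := by
      exact_mod_cast Finset.card_le_card
        (Finset.monotone_filter_right _ fun i _ hi => le_of_lt hi)
    have h2 := Finset.card_filter_add_card_filter_not (s := (Finset.univ : Finset (Fin n)))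
      (fun i => x i ⬝ᵥ β ≤ 0)
    simp only [not_le, Finset.card_univ, Fintype.card_fin] at h2
    have h3 : ((Finset.univ.filter fun i => x i ⬝ᵥ β ≤ 0).card : ℝ) +
      (Finset.univ.filter fun i => 0 < x i ⬝ᵥ β).card = n := by exact_mod_cast h2
    nlinarith

lemma Mu0Complex.card_le' {n : ℕ} {x : Fin n → Fin 2 → ℝ} {μ : ℝ} (hμ : 1 ≤ μ)
    (hx : Mu0Complex x μ) (β : Fin 2 → ℝ) :
    (n : ℝ) ≤ (1 + μ) * ((Finset.univ.filter fun i => x i ⬝ᵥ β ≤ 0).card : ℝ) := by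
  simpa only [dotProduct_neg, Left.nonneg_neg_iff] using hx.card_le hμ (-β)

/-- The rows of an ℓ₀-complex matrix separate points: otherwise all rows would lie in the closed
half-plane of some `η ≠ 0`, and none in the open complement. -/
lemma Mu0Complex.exists_ne_zero {n : ℕ} (hn : 1 ≤ n) {x : Fin n → Fin 2 → ℝ} {μ : ℝ}
    (hx : Mu0Complex x μ) {η : Fin 2 → ℝ} (hη : η ≠ 0) : ∃ i, x i ⬝ᵥ η ≠ 0 := by
  by_contra! h
  have := hx η hη
  simp [h] at this
  omega

lemma Mu1Complex.sum_abs_le {n : ℕ} {x : Fin n → Fin 2 → ℝ} {μ : ℝ}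
    (hx : Mu1Complex x μ) (β : Fin 2 → ℝ) :
    ∑ i, |x i ⬝ᵥ β| ≤ (1 + μ) * ∑ i, max (x i ⬝ᵥ β) 0 := by
  have h := hx (-β)
  simp only [dotProduct_neg, Left.neg_neg_iff, Left.nonneg_neg_iff, Finset.sum_filter] at h
  have e1 : ∀ z : ℝ, (if z ≤ 0 then -z else 0) = max (-z) 0 := by
    intro z
    split_ifs with hz
    · rw [max_eq_left (by linarith)]
    · rw [max_eq_right (by linarith)]
  have e2 : ∀ z : ℝ, (if 0 < z then |(-z)| else 0) = max z 0 := by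
    intro z
    split_ifs with hz
    · rw [abs_neg, abs_of_pos hz, max_eq_left hz.le]
    · rw [max_eq_right (by linarith)]
  have e3 : ∀ z : ℝ, |z| = max z 0 + max (-z) 0 := by
    intro z
    rcases le_total 0 z with hz | hz
    · rw [abs_of_nonneg hz, max_eq_left hz, max_eq_right (by linarith)]; ring
    · rw [abs_of_nonpos hz, max_eq_right hz, max_eq_left (by linarith)]; ring
  simp only [e1, e2] at h
  simp only [e3, Finset.sum_add_distrib]
  linarith

/-- The ℓ₁ sensitivities of an injective `n × 2` matrix sum to at most `√(2n)`; the bounds `s i` are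
the square roots of the leverage scores `xᵢᵀ (XᵀX)⁻¹ xᵢ`. -/
lemma exists_l1_sensitivity {n : ℕ} {x : Fin n → Fin 2 → ℝ}
    (hx : ∀ η : Fin 2 → ℝ, η ≠ 0 → ∃ i, x i ⬝ᵥ η ≠ 0) :
    ∃ s : Fin n → ℝ, (∀ i, 0 ≤ s i) ∧ ∑ i, s i ≤ Real.sqrt (2 * n) ∧
      ∀ β i, |x i ⬝ᵥ β| ≤ s i * ∑ j, |x j ⬝ᵥ β| := by
  obtain ⟨A, hA⟩ : ∃ A, A = ∑ i, x i 0 ^ 2 := ⟨_, rfl⟩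
  obtain ⟨B, hB⟩ : ∃ B, B = ∑ i, x i 0 * x i 1 := ⟨_, rfl⟩
  obtain ⟨C, hC⟩ : ∃ C, C = ∑ i, x i 1 ^ 2 := ⟨_, rfl⟩
  have hform : ∀ β : Fin 2 → ℝ,
      ∑ i, (x i ⬝ᵥ β) ^ 2 = A * β 0 ^ 2 + 2 * B * (β 0 * β 1) + C * β 1 ^ 2 := by
    intro β
    rw [hA, hB, hC, Finset.sum_mul, Finset.mul_sum, Finset.sum_mul, Finset.sum_mul,
      ← Finset.sum_add_distrib, ← Finset.sum_add_distrib]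
    refine Finset.sum_congr rfl fun i _ => ?_
    simp only [dotProduct, Fin.sum_univ_two]
    ring
  have hpos : ∀ β : Fin 2 → ℝ, β ≠ 0 →
      0 < A * β 0 ^ 2 + 2 * B * (β 0 * β 1) + C * β 1 ^ 2 := by
    intro β hβ
    obtain ⟨i, hi⟩ := hx β hβ
    rw [← hform]
    exact Finset.sum_pos' (fun i _ => sq_nonneg _) ⟨i, Finset.mem_univ i, by positivity⟩
  have hCpos : 0 < C := by
    have := hpos ![0, 1] (fun h => by simpa using congrFun h 1)
    simpa using this
  -- The Gram form takes the value `C * det` at `(C, -B)`.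
  have hD : 0 < A * C - B ^ 2 := by
    have h := hpos ![C, -B] (fun h => hCpos.ne' (by simpa using congrFun h 0))
    simp at h
    exact pos_of_mul_pos_right (a := C) (by linarith) hCpos.le
  obtain ⟨τ, hτ⟩ : ∃ τ : Fin n → ℝ, τ = fun i =>
    (C * x i 0 ^ 2 - 2 * B * (x i 0 * x i 1) + A * x i 1 ^ 2) / (A * C - B ^ 2) := ⟨_, rfl⟩
  have hτsum : ∑ i, τ i = 2 := by
    rw [hτ, ← Finset.sum_div, Finset.sum_add_distrib, Finset.sum_sub_distrib, ← Finset.mul_sum,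
      ← Finset.mul_sum, ← Finset.mul_sum, ← hA, ← hB, ← hC]
    rw [div_eq_iff hD.ne']
    ring
  have hτle : ∀ i, ∀ β : Fin 2 → ℝ, (x i ⬝ᵥ β) ^ 2 ≤ τ i * ∑ j, (x j ⬝ᵥ β) ^ 2 := by
    intro i β
    rw [hform, hτ]
    simp only
    rw [div_mul_eq_mul_div, le_div_iff₀ hD]
    simp only [dotProduct, Fin.sum_univ_two]
    -- Lagrange's identity for the Gram form and its adjugate.
    nlinarith [sq_nonneg ((x i 0) * (B * β 0 + C * β 1) - (x i 1) * (A * β 0 + B * β 1))]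
  have hτ0 : ∀ i, 0 ≤ τ i := by
    intro i
    have h := (sq_nonneg _).trans (hτle i ![0, 1])
    rw [hform] at h
    simp at h
    exact nonneg_of_mul_nonneg_left h hCpos
  refine ⟨fun i => Real.sqrt (τ i), fun i => Real.sqrt_nonneg _, ?_, ?_⟩
  · apply Real.le_sqrt_of_sq_le
    have h := sq_sum_le_card_mul_sum_sq (s := Finset.univ) (f := fun i => Real.sqrt (τ i))
    simp only [Real.sq_sqrt (hτ0 _), hτsum, Finset.card_univ, Fintype.card_fin] at h
    linarith
  · intro β i
    have h2 : ∑ j, (x j ⬝ᵥ β) ^ 2 ≤ (∑ j, |x j ⬝ᵥ β|) ^ 2 := by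
      have := Finset.sum_sq_le_sq_sum_of_nonneg (s := Finset.univ) (f := fun j => |x j ⬝ᵥ β|)
        (fun _ _ => abs_nonneg _)
      simpa only [sq_abs] using this
    refine abs_le_of_sq_le_sq ?_
      (mul_nonneg (Real.sqrt_nonneg _) (Finset.sum_nonneg fun _ _ => abs_nonneg _))
    rw [mul_pow, Real.sq_sqrt (hτ0 i)]
    exact (hτle i β).trans (mul_le_mul_of_nonneg_left h2 (hτ0 i))

/-- Total sensitivity bound for the 3PL objective `f₁ + f₂`: there exist nonnegative
sensitivity upper bounds `s_i` summing to at most `170 μ² √m + 7 E μ` (with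
`m = m' + m''`). -/
theorem stmt15 {m' m'' : ℕ} (hm' : 1 ≤ m') (hm'' : 1 ≤ m'') (μ : ℝ) (hμ : 1 ≤ μ)
    (X' : Fin m' → Fin 2 → ℝ) (X'' : Fin m'' → Fin 2 → ℝ)
    (hX'1 : Mu1Complex X' μ) (hX'0 : Mu0Complex X' μ)
    (hX''1 : Mu1Complex X'' μ) (hX''0 : Mu0Complex X'' μ)
    (hratio : ∀ η : Fin 2 → ℝ, ∑ i, |X'' i ⬝ᵥ η| ≤ 2 * μ * ∑ i, |X' i ⬝ᵥ η|)
    (c : Fin m' ⊕ Fin m'' → ℝ) (hc : ∀ i, 0 < c i ∧ c i < 1 / 2)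
    (E : ℝ) (hE : ∀ i, Real.log (1 / c i) ≤ E) :
    ∃ s : Fin m' ⊕ Fin m'' → ℝ, (∀ i, 0 ≤ s i) ∧
      (∑ i, s i ≤ 170 * μ ^ 2 * Real.sqrt ((m' : ℝ) + (m'' : ℝ)) + 7 * E * μ) ∧
      ∀ β : Fin 2 → ℝ,
        (∀ i : Fin m',
          gfun (c (Sum.inl i)) (X' i ⬝ᵥ β) ≤
            s (Sum.inl i) *
              ((∑ i', gfun (c (Sum.inl i')) (X' i' ⬝ᵥ β)) +
                ∑ i', hfun (c (Sum.inr i')) (X'' i' ⬝ᵥ β))) ∧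
        (∀ i : Fin m'',
          hfun (c (Sum.inr i)) (X'' i ⬝ᵥ β) ≤
            s (Sum.inr i) *
              ((∑ i', gfun (c (Sum.inl i')) (X' i' ⬝ᵥ β)) +
                ∑ i', hfun (c (Sum.inr i')) (X'' i' ⬝ᵥ β))) := by
  have hmp : (1 : ℝ) ≤ m' := by exact_mod_cast hm'
  have hmpp : (1 : ℝ) ≤ m'' := by exact_mod_cast hm''
  have hμ0 : 0 < μ := by linarith
  obtain ⟨M, hM⟩ : ∃ M : ℝ, M = (m' : ℝ) + m'' := ⟨_, rfl⟩
  have hM0 : 0 < M := by linarith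
  have hE0 : 0 ≤ E := by
    refine le_trans (Real.log_nonneg ?_) (hE (Sum.inl ⟨0, hm'⟩))
    rw [le_div_iff₀ (hc _).1]
    linarith [(hc (Sum.inl ⟨0, hm'⟩)).2]
  obtain ⟨s', hs'0, hs'sum, hs'⟩ :=
    exists_l1_sensitivity (x := X') fun η hη => hX'0.exists_ne_zero hm' hη
  obtain ⟨s'', hs''0, hs''sum, hs''⟩ :=
    exists_l1_sensitivity (x := X'') fun η hη => hX''0.exists_ne_zero hm'' hη
  refine ⟨Sum.elim (fun i => 16 * μ / M + 2 * μ * s' i)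
    (fun i => 16 * μ / M + 4 * μ ^ 2 * s'' i), ?_, ?_, ?_⟩
  · rintro (i | i)
    · have := hs'0 i
      simp only [Sum.elim_inl]
      positivity
    · have := hs''0 i
      simp only [Sum.elim_inr]
      positivity
  · rw [Fintype.sum_sum_type]
    simp only [Sum.elim_inl, Sum.elim_inr, Finset.sum_add_distrib, ← Finset.mul_sum,
      Finset.sum_const, Finset.card_univ, Fintype.card_fin, nsmul_eq_mul]
    rw [← hM]
    have hsqrt : ∀ t : ℝ, t ≤ M → Real.sqrt (2 * t) ≤ 2 * Real.sqrt M := by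
      intro t ht
      calc Real.sqrt (2 * t) ≤ Real.sqrt (2 ^ 2 * M) := Real.sqrt_le_sqrt (by linarith)
        _ = 2 * Real.sqrt M := by
          rw [Real.sqrt_mul (by norm_num), Real.sqrt_sq (by norm_num)]
    have h1 := hs'sum.trans (hsqrt m' (by linarith))
    have h2 := hs''sum.trans (hsqrt m'' (by linarith))
    have h3 : (m' : ℝ) * (16 * μ / M) + m'' * (16 * μ / M) = 16 * μ := by
      rw [← add_mul, ← hM]
      field_simp
    have hr : 1 ≤ Real.sqrt M := Real.one_le_sqrt.2 (by linarith)
    have hμ2 : μ ≤ μ ^ 2 := by nlinarith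
    have h4 : 2 * μ * ∑ i, s' i ≤ 2 * μ ^ 2 * (2 * Real.sqrt M) :=
      mul_le_mul (by linarith) h1 (Finset.sum_nonneg fun i _ => hs'0 i) (by positivity)
    have h5 : 4 * μ ^ 2 * ∑ i, s'' i ≤ 4 * μ ^ 2 * (2 * Real.sqrt M) :=
      mul_le_mul_of_nonneg_left h2 (by positivity)
    have h6 : 16 * μ ≤ 16 * μ ^ 2 * Real.sqrt M := by nlinarith
    have h7 : 0 ≤ 7 * E * μ := by positivity
    have h8 : 0 ≤ μ ^ 2 * Real.sqrt M := by positivity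
    linarith
  · intro β
    obtain ⟨F, hF⟩ : ∃ F, F = ∑ i', gfun (c (Sum.inl i')) (X' i' ⬝ᵥ β) := ⟨_, rfl⟩
    obtain ⟨H, hH⟩ : ∃ H, H = ∑ i', hfun (c (Sum.inr i')) (X'' i' ⬝ᵥ β) := ⟨_, rfl⟩
    rw [← hF, ← hH]
    have hg0 : ∀ i, 0 ≤ gfun (c (Sum.inl i)) (X' i ⬝ᵥ β) := fun i =>
      (le_max_right _ _).trans (max_le_gfun _ (hc _).1 (hc _).2)
    have hh0 : ∀ i, 0 ≤ hfun (c (Sum.inr i)) (X'' i ⬝ᵥ β) := fun i =>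
      hfun_nonneg _ (hc _).1 (hc _).2
    have hH0 : 0 ≤ H := hH ▸ Finset.sum_nonneg fun i _ => hh0 i
    have hFcard : ((Finset.univ.filter fun i => 0 ≤ X' i ⬝ᵥ β).card : ℝ) * (1 / 2) ≤ F := by
      rw [hF, ← nsmul_eq_mul]
      refine (Finset.card_nsmul_le_sum _ _ _ fun i hi => ?_).trans
        (Finset.sum_le_sum_of_subset_of_nonneg (Finset.filter_subset _ _) fun i _ _ => hg0 i)
      exact half_le_gfun (hc _).1 (hc _).2 (Finset.mem_filter.1 hi).2
    have hHcard : ((Finset.univ.filter fun i => X'' i ⬝ᵥ β ≤ 0).card : ℝ) * (1 / 4) ≤ H := by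
      rw [hH, ← nsmul_eq_mul]
      refine (Finset.card_nsmul_le_sum _ _ _ fun i hi => ?_).trans
        (Finset.sum_le_sum_of_subset_of_nonneg (Finset.filter_subset _ _) fun i _ _ => hh0 i)
      exact quarter_le_hfun (hc _).1 (hc _).2 (Finset.mem_filter.1 hi).2
    have hF0 : 0 ≤ F := hF ▸ Finset.sum_nonneg fun i _ => hg0 i
    have hcount : M ≤ 8 * μ * (F + H) := by
      have h1 := hX'0.card_le hμ β
      have h2 := hX''0.card_le' hμ β
      nlinarith
    have hconst : 2 ≤ 16 * μ / M * (F + H) := by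
      rw [div_mul_eq_mul_div, le_div_iff₀ hM0]
      linarith
    have hl1 : ∑ i, |X' i ⬝ᵥ β| ≤ 2 * μ * (F + H) := by
      have h1 := hX'1.sum_abs_le β
      have h2 : ∑ i, max (X' i ⬝ᵥ β) 0 ≤ F :=
        hF ▸ Finset.sum_le_sum fun i _ => max_le_gfun _ (hc _).1 (hc _).2
      nlinarith
    have hl2 : ∑ i, |X'' i ⬝ᵥ β| ≤ 4 * μ ^ 2 * (F + H) := by
      have h1 := hratio β
      nlinarith
    refine ⟨fun i => ?_, fun i => ?_⟩
    · have h1 := gfun_le (X' i ⬝ᵥ β) (hc (Sum.inl i)).2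
      have h2 := (hs' β i).trans (mul_le_mul_of_nonneg_left hl1 (hs'0 i))
      simp only [Sum.elim_inl]
      linarith
    · have h1 := hfun_le (X'' i ⬝ᵥ β) (hc (Sum.inr i)).1
      have h2 := (hs'' β i).trans (mul_le_mul_of_nonneg_left hl2 (hs''0 i))
      simp only [Sum.elim_inr]
      linarith
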